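/- Every cutting blocking set S of PG(N,q) has at least N(q+1) points. Equivalently, every minimal [n,k]_q linear code satisfies n ≥ (q+1)(k-1). -/

import Mathlib

open Module

/-!
A minimal code and a cutting blocking set both give a linear map `φ : W → Kⁿ` such that
`supp (φ c') ⊆ supp (φ c)` with `c ≠ 0` forces `c'` to be a multiple of `c`. Take `c ≠ 0` with
`φ c` of maximal weight. By minimality, restricting `φ` to the coordinates where `φ c` vanishes
loses only one dimension, and every code contains a word whose weight is at least its dimension;
hence some `φ g` has at least `dim W - 1` nonzero entries outside `supp (φ c)`. Averaging the weight
of `φ (g + l • c)` over `l ∈ K` and comparing with the maximal weight shows that `φ c` has weight at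
least `q (dim W - 1)`, so that `n ≥ (q + 1) (dim W - 1)`.
-/

open scoped Finset

section HammingWeight

variable {R ι : Type*} [Fintype ι] [DecidableEq R]

theorem exists_forall_hammingNorm_le [Zero R] {C : Set (ι → R)} (hC : C.Nonempty) :
    ∃ c ∈ C, ∀ c' ∈ C, hammingNorm c' ≤ hammingNorm c := by
  have hfin : (hammingNorm '' C).Finite :=
    (Set.finite_Iic (Fintype.card ι)).subset <|
      Set.image_subset_iff.2 fun _ _ => hammingNorm_le_card_fintype
  obtain ⟨c, hcC, hc⟩ := Set.Finite.exists_maximalFor' hammingNorm C hfin hC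
  exact ⟨c, hcC, fun c' hc' => (le_total _ _).elim id (hc hc')⟩

theorem hammingNorm_add_of_disjoint_support [AddZeroClass R] {x y : ι → R}
    (hxy : Disjoint (Function.support x) (Function.support y)) :
    hammingNorm (x + y) = hammingNorm x + hammingNorm y := by
  simp only [hammingNorm, Finset.card_filter, ← Finset.sum_add_distrib]
  refine Finset.sum_congr rfl fun i _ => ?_
  by_cases hx : x i = 0
  · simp [hx]
  · have hy : y i = 0 := by_contra fun hy => Set.disjoint_left.1 hxy hx hy
    simp [hx, hy]

theorem exists_finrank_le_hammingNorm [Ring R] [StrongRankCondition R]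
    (C : Submodule R (ι → R)) : ∃ c ∈ C, finrank R C ≤ hammingNorm c := by
  obtain ⟨c, hcC, hmax⟩ := exists_forall_hammingNorm_le (C := (C : Set (ι → R))) ⟨0, C.zero_mem⟩
  refine ⟨c, hcC, ?_⟩
  let restrict : C →ₗ[R] ({i // c i ≠ 0} → R) := LinearMap.funLeft R R Subtype.val ∘ₗ C.subtype
  -- A word vanishing on the support of `c` can be added to `c` without cancellation.
  have hinj : Function.Injective restrict := by
    refine (injective_iff_map_eq_zero restrict).2 fun h hh => ?_
    have hdisj : Disjoint (Function.support c) (Function.support (h : ι → R)) :=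
      Set.disjoint_left.2 fun i hci hhi => hhi (congrFun hh ⟨i, hci⟩)
    have hle := hmax (c + h) (C.add_mem hcC h.2)
    rw [hammingNorm_add_of_disjoint_support hdisj] at hle
    exact Subtype.ext (hammingNorm_eq_zero.1 (by lia))
  calc finrank R C ≤ finrank R ({i // c i ≠ 0} → R) :=
        LinearMap.finrank_le_finrank_of_injective hinj
    _ = hammingNorm c := by rw [finrank_fintype_fun_eq_card, Fintype.card_subtype, hammingNorm]

end HammingWeight

section Residual

variable {R ι : Type*} [Semiring R]

/-- Restriction of words to the coordinates where `c` vanishes. The image of a code containing `c`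
is its residual code with respect to `c`. -/
def residualWord (c : ι → R) : (ι → R) →ₗ[R] ({i // c i = 0} → R) :=
  LinearMap.funLeft R R Subtype.val

theorem residualWord_eq_zero_iff {c g : ι → R} :
    residualWord c g = 0 ↔ Function.support g ⊆ Function.support c := by
  simp [residualWord, funext_iff, Set.subset_def, not_imp_not]

variable [Fintype ι] [DecidableEq R]

theorem hammingNorm_residualWord (c g : ι → R) :
    hammingNorm (residualWord c g) = #{i | c i = 0 ∧ g i ≠ 0} := by
  have hsub : ({i | residualWord c g i ≠ 0} : Finset {i // c i = 0}) =
      ({i | g i ≠ 0} : Finset ι).subtype (c · = 0) := by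
    ext i
    simp only [Finset.mem_filter, Finset.mem_univ, true_and, Finset.mem_subtype]
    rfl
  rw [hammingNorm, hsub, Finset.card_subtype, Finset.filter_filter]
  simp only [and_comm]

theorem hammingNorm_residualWord_add_le_card (c g : ι → R) :
    hammingNorm (residualWord c g) + hammingNorm c ≤ Fintype.card ι := by
  calc hammingNorm (residualWord c g) + hammingNorm c
      ≤ Fintype.card {i // c i = 0} + hammingNorm c := by
        gcongr
        exact hammingNorm_le_card_fintype
    _ = Fintype.card ι := by
        rw [Fintype.card_subtype, hammingNorm, Finset.card_filter_add_card_filter_not,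
          Finset.card_univ]

end Residual

section Pencil

variable {K ι : Type*} [Field K] [Fintype K] [DecidableEq K]

theorem card_add_mul_ne_zero_add_one (a : K) {b : K} (hb : b ≠ 0) :
    #{l : K | a + l * b ≠ 0} + 1 = Fintype.card K := by
  have hroot : ({l : K | a + l * b ≠ 0} : Finset K) = Finset.univ.erase (-a / b) := by
    ext l
    simp [eq_div_iff hb, eq_neg_iff_add_eq_zero, add_comm]
  rw [hroot, Finset.card_erase_add_one (Finset.mem_univ _), Finset.card_univ]

variable [Fintype ι]

theorem sum_hammingNorm_add_smul (g c : ι → K) :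
    ∑ l : K, hammingNorm (g + l • c) + hammingNorm c =
      Fintype.card K * (hammingNorm (residualWord c g) + hammingNorm c) := by
  rw [hammingNorm_residualWord]
  simp only [hammingNorm, Finset.card_filter]
  rw [Finset.sum_comm, ← Finset.sum_add_distrib, ← Finset.sum_add_distrib, Finset.mul_sum]
  refine Finset.sum_congr rfl fun i _ => ?_
  by_cases hc : c i = 0
  · by_cases hg : g i = 0 <;> simp [hc, hg]
  · simpa [hc, Finset.card_filter] using card_add_mul_ne_zero_add_one (g i) hc

theorem card_mul_hammingNorm_residualWord_le {g c : ι → K}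
    (hmax : ∀ l : K, hammingNorm (g + l • c) ≤ hammingNorm c) :
    Fintype.card K * hammingNorm (residualWord c g) ≤ hammingNorm c := by
  have hsum : ∑ l : K, hammingNorm (g + l • c) ≤ Fintype.card K * hammingNorm c := by
    simpa using Finset.sum_le_card_nsmul Finset.univ _ _ fun l _ => hmax l
  have hpencil := sum_hammingNorm_add_smul g c
  rw [mul_add] at hpencil
  lia

end Pencil

section MinimalEncoding

variable {K W ι : Type*} [Field K] [AddCommGroup W] [Module K W]

/-- A linear map `φ`, encoding messages as words, is minimal if every message whose word has its
support inside that of the word of a nonzero message `c` is a multiple of `c`. This covers minimal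
codes and evaluation at cutting blocking sets alike. Injectivity is not required: over a
one-dimensional space of linear forms, the empty set of points is cutting but `φ = 0`. -/
def IsMinimalEncoding (φ : W →ₗ[K] (ι → K)) : Prop :=
  ∀ c ≠ 0, ∀ c', Function.support (φ c') ⊆ Function.support (φ c) → c' ∈ Submodule.span K {c}

namespace IsMinimalEncoding

variable {φ : W →ₗ[K] (ι → K)}

theorem finrank_le_finrank_range_residualWord_add_one [FiniteDimensional K W]
    (hφ : IsMinimalEncoding φ) {c : W} (hc : c ≠ 0) :
    finrank K W ≤ finrank K (LinearMap.range (residualWord (φ c) ∘ₗ φ)) + 1 := by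
  have hker : LinearMap.ker (residualWord (φ c) ∘ₗ φ) ≤ Submodule.span K {c} :=
    fun g hg => hφ c hc g (residualWord_eq_zero_iff.1 hg)
  calc finrank K W
      = finrank K (LinearMap.range (residualWord (φ c) ∘ₗ φ)) +
          finrank K (LinearMap.ker (residualWord (φ c) ∘ₗ φ)) :=
        (LinearMap.finrank_range_add_finrank_ker _).symm
    _ ≤ finrank K (LinearMap.range (residualWord (φ c) ∘ₗ φ)) + 1 := by
        gcongr
        exact (Submodule.finrank_mono hker).trans_eq (finrank_span_singleton hc)

theorem exists_finrank_sub_one_le_hammingNorm_residualWord [Fintype ι] [DecidableEq K]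
    [FiniteDimensional K W] (hφ : IsMinimalEncoding φ) {c : W} (hc : c ≠ 0) :
    ∃ g, finrank K W - 1 ≤ hammingNorm (residualWord (φ c) (φ g)) := by
  obtain ⟨_, ⟨g, rfl⟩, hg⟩ :=
    exists_finrank_le_hammingNorm (LinearMap.range (residualWord (φ c) ∘ₗ φ))
  exact ⟨g, Nat.sub_le_of_le_add <|
    (hφ.finrank_le_finrank_range_residualWord_add_one hc).trans (Nat.add_le_add_right hg 1)⟩

theorem card_add_one_mul_finrank_sub_one_le [Fintype ι] [Fintype K] [FiniteDimensional K W]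
    (hφ : IsMinimalEncoding φ) :
    (Fintype.card K + 1) * (finrank K W - 1) ≤ Fintype.card ι := by
  classical
  rcases subsingleton_or_nontrivial W with _ | _
  · simp [finrank_zero_of_subsingleton]
  have hne : ({0}ᶜ : Set W).Nonempty := exists_ne 0
  obtain ⟨_, ⟨c, hc, rfl⟩, hmax⟩ := exists_forall_hammingNorm_le (hne.image φ)
  have hmax' (w : W) : hammingNorm (φ w) ≤ hammingNorm (φ c) := by
    by_cases hw : w = 0
    · simp [hw]
    · exact hmax _ ⟨w, hw, rfl⟩
  obtain ⟨g, hg⟩ := hφ.exists_finrank_sub_one_le_hammingNorm_residualWord hc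
  have hpencil : Fintype.card K * hammingNorm (residualWord (φ c) (φ g)) ≤ hammingNorm (φ c) :=
    card_mul_hammingNorm_residualWord_le fun l => by simpa using hmax' (g + l • c)
  calc (Fintype.card K + 1) * (finrank K W - 1)
      ≤ (Fintype.card K + 1) * hammingNorm (residualWord (φ c) (φ g)) := by gcongr
    _ = hammingNorm (residualWord (φ c) (φ g)) +
          Fintype.card K * hammingNorm (residualWord (φ c) (φ g)) := by ring
    _ ≤ hammingNorm (residualWord (φ c) (φ g)) + hammingNorm (φ c) := by gcongr
    _ ≤ Fintype.card ι := hammingNorm_residualWord_add_le_card _ _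

end IsMinimalEncoding

end MinimalEncoding

section MinimalCode

variable {K ι : Type*} [Field K]

/-- A linear code is minimal if every codeword whose support lies in that of a nonzero codeword `c`
is a multiple of `c`. -/
def IsMinimalCode (C : Submodule K (ι → K)) : Prop :=
  ∀ c ∈ C, c ≠ 0 → ∀ c' ∈ C, Function.support c' ⊆ Function.support c → ∃ l : K, c' = l • c

theorem IsMinimalCode.isMinimalEncoding_subtype {C : Submodule K (ι → K)} (hC : IsMinimalCode C) :
    IsMinimalEncoding C.subtype := by
  intro c hc c' hsupp
  obtain ⟨l, hl⟩ := hC c c.2 (by simpa using hc) c' c'.2 hsupp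
  exact Submodule.mem_span_singleton.2 ⟨l, Subtype.ext hl.symm⟩

end MinimalCode

section CuttingBlockingSet

open Projectivization
open scoped LinearAlgebra.Projectivization

variable {K V : Type*} [Field K] [AddCommGroup V] [Module K V]

/-- A cutting blocking set of the projective space of `V`: a set of points meeting every hyperplane
in a spanning set. Points are represented by all their nonzero vectors, and hyperplanes by the
subspaces of codimension one, expressed through `finrank` for finite-dimensional `V`. -/
def IsCuttingBlockingSet (S : Set (ℙ K V)) : Prop :=
  ∀ H : Submodule K V, finrank K H + 1 = finrank K V →
    Submodule.span K {v | (∃ hv : v ≠ 0, mk K v hv ∈ S) ∧ v ∈ H} = H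

/-- Evaluation of linear forms at the points of `S`, whose range is the projective code of `S`.
The chosen representatives matter only up to scaling the coordinates. -/
noncomputable def evalRep (S : Set (ℙ K V)) : Dual K V →ₗ[K] (S → K) :=
  LinearMap.pi fun s => Dual.eval K V s.1.rep

theorem map_rep_mk_eq_zero_iff (f : Dual K V) {v : V} (hv : v ≠ 0) :
    f (mk K v hv).rep = 0 ↔ f v = 0 := by
  obtain ⟨a, ha⟩ := exists_smul_eq_mk_rep K v hv
  rw [← ha, Units.smul_def, map_smul, smul_eq_zero_iff_right a.ne_zero]

theorem IsCuttingBlockingSet.ker_le_ker [FiniteDimensional K V] {S : Set (ℙ K V)}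
    (hS : IsCuttingBlockingSet S) {f g : Dual K V} (hf : f ≠ 0)
    (hfg : Function.support (evalRep S g) ⊆ Function.support (evalRep S f)) :
    LinearMap.ker f ≤ LinearMap.ker g := by
  rw [← hS _ (Dual.finrank_ker_add_one_of_ne_zero hf), Submodule.span_le]
  rintro v ⟨⟨hv, hvS⟩, hvf⟩
  have hfv : evalRep S f ⟨mk K v hv, hvS⟩ = 0 := (map_rep_mk_eq_zero_iff f hv).2 hvf
  have hgv : evalRep S g ⟨mk K v hv, hvS⟩ = 0 := by_contra fun h => hfg h hfv
  exact (map_rep_mk_eq_zero_iff g hv).1 hgv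

theorem IsCuttingBlockingSet.isMinimalEncoding_evalRep [FiniteDimensional K V] {S : Set (ℙ K V)}
    (hS : IsCuttingBlockingSet S) : IsMinimalEncoding (evalRep S) := by
  intro f hf g hfg
  simpa using mem_span_of_iInf_ker_le_ker (L := fun _ : Unit => f)
    (by simpa using hS.ker_le_ker hf hfg)

theorem IsCuttingBlockingSet.card_add_one_mul_finrank_sub_one_le_ncard [Fintype K]
    [FiniteDimensional K V] {S : Set (ℙ K V)} (hS : IsCuttingBlockingSet S) :
    (Fintype.card K + 1) * (finrank K V - 1) ≤ S.ncard := by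
  have : Finite V := Module.finite_of_finite K
  have : Fintype S := Fintype.ofFinite S
  have hbound := hS.isMinimalEncoding_evalRep.card_add_one_mul_finrank_sub_one_le
  rwa [Subspace.dual_finrank_eq, ← Nat.card_eq_fintype_card (α := S), Nat.card_coe_set_eq] at hbound

end CuttingBlockingSet

theorem stmt_16 (q : ℕ) (K : Type) [Field K] [Fintype K] (hK : Fintype.card K = q) :
    -- every cutting blocking set of PG(N,q) has at least N(q+1) points
    (∀ (N : ℕ) (S : Set (Projectivization K (Fin (N + 1) → K))),
      (∀ H : Submodule K (Fin (N + 1) → K), finrank K H = N →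
        Submodule.span K
            {v : Fin (N + 1) → K |
              (∃ hv : v ≠ 0, Projectivization.mk K v hv ∈ S) ∧ v ∈ H} = H) →
      N * (q + 1) ≤ S.ncard) ∧
    -- equivalently, every minimal [n,k]_q code satisfies n ≥ (q+1)(k-1)
    (∀ (n k : ℕ) (C : Submodule K (Fin n → K)), finrank K C = k →
      (∀ c ∈ C, c ≠ 0 →
        ∀ c' ∈ C, {i | c' i ≠ 0} ⊆ {i | c i ≠ 0} → ∃ lam : K, c' = lam • c) →
      (q + 1) * (k - 1) ≤ n) := by
  subst hK
  constructor
  · intro N S hS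
    have hcut : IsCuttingBlockingSet S := fun H hH => hS H (by simpa using hH)
    simpa [mul_comm] using hcut.card_add_one_mul_finrank_sub_one_le_ncard
  · rintro n k C rfl hC
    have hmin : IsMinimalCode C := hC
    simpa using hmin.isMinimalEncoding_subtype.card_add_one_mul_finrank_sub_one_le
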